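/- In a finite Möbius plane of order q, there exists a point set S of size at most ((q+2)/2)·(1 + log(q^5)) that resolves the set of circles: for any two distinct circles a, b there is a point of S lying on exactly one of them. -/

import Mathlib

open Finset

/-- A Möbius plane on a point type `P`: circles are finite point sets
satisfying the four Möbius plane axioms. -/
structure MobiusPlane (P : Type*) [DecidableEq P] where
  circles : Finset (Finset P)
  ax1 : ∀ A B C : P, A ≠ B → A ≠ C → B ≠ C →
    ∃! z, z ∈ circles ∧ A ∈ z ∧ B ∈ z ∧ C ∈ z
  ax2 : ∀ z ∈ circles, ∀ p ∈ z, ∀ q : P, q ∉ z →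
    ∃! z', z' ∈ circles ∧ p ∈ z' ∧ q ∈ z' ∧ z ∩ z' = {p}
  ax3 : circles.Nonempty ∧ ∀ z ∈ circles, 3 ≤ z.card
  ax4 : ∀ z ∈ circles, ∃ x : P, x ∉ z

/-- A finite Möbius plane has order `q` if every circle has exactly `q + 1` points. -/
def MobiusPlane.HasOrder {P : Type*} [DecidableEq P] (M : MobiusPlane P) (q : ℕ) : Prop :=
  ∀ z ∈ M.circles, z.card = q + 1

/-!
Call the symmetric differences of pairs of distinct circles the edges of a hypergraph: a resolving
set is exactly a blocking set of it. Two circles share at most two points, so every edge has at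
least `2q - 2` points and the constant weight `1 / (2q - 2)` is a fractional blocking set of total
weight `(q² + 1) / (2q - 2)`, which is at most `(q + 2) / 2` once `q ≥ 3`. For `q = 2` all five
points do. A point lies on `q(q + 1)` circles and off `q³ - q²`, hence on at most `q⁵ - q³` edges.

Lovász's theorem comes from the greedy choice of a vertex `u` of maximum degree `d` among the edges
not yet blocked. For a fractional blocking set `w`, the potential `∑ v, w v * H (deg v)`, with `H`
the harmonic numbers, drops by at least `1` at each choice: lowering a degree by `j` costs `v` at
least `w v * j / d`, and summed over `v` the lost incidences weigh at least `1` for each of the `d`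
edges through `u`.
-/

open scoped symmDiff

section Lovasz

variable {V : Type*}

/-- `S` is a blocking set (transversal) of the hypergraph with edge set `H` if it meets every
edge. -/
def IsBlockingSet (H : Finset (Finset V)) (S : Finset V) : Prop :=
  ∀ e ∈ H, ∃ v ∈ S, v ∈ e

/-- `w` is a fractional blocking set of the hypergraph with edge set `H` if it is nonnegative and
gives every edge total weight at least `1`. The least total weight of such a `w` is `τ*`. -/
structure IsFractionalBlockingSet (H : Finset (Finset V)) (w : V → ℝ) : Prop where
  nonneg : ∀ v, 0 ≤ w v
  one_le_sum : ∀ e ∈ H, 1 ≤ ∑ v ∈ e, w v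

variable {H : Finset (Finset V)} {w : V → ℝ}

lemma IsFractionalBlockingSet.mono {H' : Finset (Finset V)} (hw : IsFractionalBlockingSet H w)
    (hH : H' ⊆ H) : IsFractionalBlockingSet H' w :=
  ⟨hw.nonneg, fun e he => hw.one_le_sum e (hH he)⟩

lemma isFractionalBlockingSet_const {c : ℝ} (hc : 0 < c) (hH : ∀ e ∈ H, c ≤ #e) :
    IsFractionalBlockingSet H fun _ => 1 / c where
  nonneg _ := by positivity
  one_le_sum e he := by
    rw [sum_const, nsmul_eq_mul, mul_one_div, one_le_div hc]
    exact hH e he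

lemma sub_div_le_harmonic_sub_harmonic {m n d : ℕ} (hmn : m ≤ n) (hnd : n ≤ d) :
    ((n : ℚ) - m) / d ≤ harmonic n - harmonic m := by
  induction n, hmn using Nat.le_induction with
  | base => simp
  | succ n _ ih =>
    have hlast : (1 : ℚ) / d ≤ (↑(n + 1))⁻¹ := by
      rw [← one_div]
      gcongr
    calc ((↑(n + 1) : ℚ) - m) / d = ((n : ℚ) - m) / d + 1 / d := by push_cast; ring
      _ ≤ (harmonic n - harmonic m) + (↑(n + 1))⁻¹ := add_le_add (ih (by lia)) hlast
      _ = harmonic (n + 1) - harmonic m := by rw [harmonic_succ]; ring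

lemma harmonic_mono : Monotone harmonic := fun m n hmn => by
  have : (0 : ℚ) ≤ ((n : ℚ) - m) / n :=
    div_nonneg (sub_nonneg.2 (by exact_mod_cast hmn)) n.cast_nonneg
  linarith [sub_div_le_harmonic_sub_harmonic hmn le_rfl]

variable [DecidableEq V]

lemma IsBlockingSet.insert {S : Finset V} {v : V} (hS : IsBlockingSet {e ∈ H | v ∉ e} S) :
    IsBlockingSet H (insert v S) := by
  intro e he
  by_cases hve : v ∈ e
  · exact ⟨v, mem_insert_self v S, hve⟩
  · obtain ⟨u, hu, hue⟩ := hS e (mem_filter.2 ⟨he, hve⟩)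
    exact ⟨u, mem_insert_of_mem hu, hue⟩

variable [Fintype V]

lemma sum_sum_eq_sum_mul_card_filter_mem (H : Finset (Finset V)) (w : V → ℝ) :
    ∑ e ∈ H, ∑ v ∈ e, w v = ∑ v, w v * #{e ∈ H | v ∈ e} := by
  rw [sum_comm' (t' := univ) (s' := fun v => {e ∈ H | v ∈ e}) (by simp)]
  simp only [sum_const, nsmul_eq_mul, mul_comm]

lemma IsFractionalBlockingSet.sum_mul_harmonic_filter_notMem_add_one_le
    (hw : IsFractionalBlockingSet H w) {u : V} (hpos : 0 < #{e ∈ H | u ∈ e})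
    (hmax : ∀ v, #{e ∈ H | v ∈ e} ≤ #{e ∈ H | u ∈ e}) :
    ∑ v, w v * harmonic #{e ∈ {e ∈ H | u ∉ e} | v ∈ e} + 1 ≤
      ∑ v, w v * harmonic #{e ∈ H | v ∈ e} := by
  set d := #{e ∈ H | u ∈ e}
  have hd : (0 : ℝ) < d := by exact_mod_cast hpos
  have split_degree (v : V) : #{e ∈ {e ∈ H | u ∈ e} | v ∈ e} + #{e ∈ {e ∈ H | u ∉ e} | v ∈ e} =
      #{e ∈ H | v ∈ e} := by
    rw [filter_comm, filter_comm (fun e => u ∉ e), card_filter_add_card_filter_not]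
  have drop_le (v : V) : (#{e ∈ {e ∈ H | u ∈ e} | v ∈ e} : ℝ) / d ≤
      harmonic #{e ∈ H | v ∈ e} - harmonic #{e ∈ {e ∈ H | u ∉ e} | v ∈ e} := by
    have := sub_div_le_harmonic_sub_harmonic (Nat.le_of_add_left_le (split_degree v).le) (hmax v)
    rw [← split_degree v, Nat.cast_add, add_sub_cancel_right, split_degree v] at this
    simpa only [Rat.cast_div, Rat.cast_natCast, Rat.cast_sub] using (Rat.cast_le (K := ℝ)).2 this
  have one_le : 1 ≤ ∑ v, w v * (#{e ∈ {e ∈ H | u ∈ e} | v ∈ e} / d) :=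
    calc (1 : ℝ) = (∑ e ∈ H with u ∈ e, 1) / d := by
          rw [sum_const, nsmul_one, div_self hd.ne']
      _ ≤ (∑ e ∈ H with u ∈ e, ∑ v ∈ e, w v) / d := by
          gcongr with e he
          exact hw.one_le_sum e (mem_filter.1 he).1
      _ = ∑ v, w v * (#{e ∈ {e ∈ H | u ∈ e} | v ∈ e} / d) := by
          simp only [sum_sum_eq_sum_mul_card_filter_mem, sum_div, mul_div_assoc]
  have := sum_le_sum fun v (_ : v ∈ univ) => mul_le_mul_of_nonneg_left (drop_le v) (hw.nonneg v)
  simp only [mul_sub, sum_sub_distrib] at this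
  linarith

lemma IsFractionalBlockingSet.exists_isBlockingSet_card_le_sum_mul_harmonic
    (hw : IsFractionalBlockingSet H w) :
    ∃ S, IsBlockingSet H S ∧ (#S : ℝ) ≤ ∑ v, w v * harmonic #{e ∈ H | v ∈ e} := by
  induction H using Finset.strongInduction with
  | H H ih =>
  obtain rfl | ⟨e, he⟩ := H.eq_empty_or_nonempty
  · exact ⟨∅, by simp [IsBlockingSet], by simp⟩
  obtain ⟨v, hv⟩ : e.Nonempty :=
    nonempty_of_sum_ne_zero (zero_lt_one.trans_le (hw.one_le_sum e he)).ne'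
  obtain ⟨u, -, hmax⟩ := exists_max_image univ (fun v => #{e ∈ H | v ∈ e}) ⟨v, mem_univ v⟩
  have hpos : 0 < #{e ∈ H | u ∈ e} :=
    (card_pos.2 ⟨e, mem_filter.2 ⟨he, hv⟩⟩).trans_le (hmax v (mem_univ v))
  have hlt : {e ∈ H | u ∉ e} ⊂ H := by
    obtain ⟨f, hf⟩ := card_pos.1 hpos
    rw [mem_filter] at hf
    exact filter_ssubset.2 ⟨f, hf.1, not_not.2 hf.2⟩
  obtain ⟨S, hS, hcard⟩ := ih _ hlt (hw.mono (filter_subset _ _))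
  refine ⟨insert u S, hS.insert, ?_⟩
  calc (#(insert u S) : ℝ) ≤ #S + 1 := by exact_mod_cast card_insert_le u S
    _ ≤ ∑ v, w v * harmonic #{e ∈ {e ∈ H | u ∉ e} | v ∈ e} + 1 := by gcongr
    _ ≤ _ := hw.sum_mul_harmonic_filter_notMem_add_one_le hpos fun v => hmax v (mem_univ v)

theorem IsFractionalBlockingSet.exists_isBlockingSet_card_le_mul_one_add_log
    (hw : IsFractionalBlockingSet H w) {d : ℕ} (hd : ∀ v, #{e ∈ H | v ∈ e} ≤ d) :
    ∃ S, IsBlockingSet H S ∧ (#S : ℝ) ≤ (∑ v, w v) * (1 + Real.log d) := by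
  obtain ⟨S, hS, hcard⟩ := hw.exists_isBlockingSet_card_le_sum_mul_harmonic
  refine ⟨S, hS, hcard.trans ?_⟩
  rw [sum_mul]
  gcongr with v
  · exact hw.nonneg v
  · exact (Rat.cast_le.2 (harmonic_mono (hd v))).trans (harmonic_le_one_add_log d)

end Lovasz

section SetFamily

variable {α : Type*} [DecidableEq α] {𝒜 : Finset (Finset α)}

/-- The hypergraph whose edges are the symmetric differences of two distinct members of `𝒜`. A
blocking set of it is a point set resolving `𝒜`. -/
def pairSymmDiffs (𝒜 : Finset (Finset α)) : Finset (Finset α) :=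
  𝒜.offDiag.image fun p => p.1 ∆ p.2

lemma mem_pairSymmDiffs {e : Finset α} :
    e ∈ pairSymmDiffs 𝒜 ↔ ∃ a ∈ 𝒜, ∃ b ∈ 𝒜, a ≠ b ∧ a ∆ b = e := by
  simp only [pairSymmDiffs, mem_image, mem_offDiag, Prod.exists]
  tauto

lemma card_filter_mem_pairSymmDiffs_le (𝒜 : Finset (Finset α)) (x : α) :
    #{e ∈ pairSymmDiffs 𝒜 | x ∈ e} ≤ #{a ∈ 𝒜 | x ∈ a} * #{a ∈ 𝒜 | x ∉ a} := by
  rw [← card_product]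
  refine (card_le_card fun e he => ?_).trans (card_image_le (f := fun p => p.1 ∆ p.2))
  obtain ⟨he, hx⟩ := mem_filter.1 he
  obtain ⟨a, ha, b, hb, -, rfl⟩ := mem_pairSymmDiffs.1 he
  simp only [mem_image, mem_product, mem_filter, Prod.exists]
  rcases mem_symmDiff.1 hx with ⟨hxa, hxb⟩ | ⟨hxb, hxa⟩
  · exact ⟨a, b, ⟨⟨ha, hxa⟩, hb, hxb⟩, rfl⟩
  · exact ⟨b, a, ⟨⟨hb, hxb⟩, ha, hxa⟩, symmDiff_comm b a⟩

lemma IsBlockingSet.exists_mem_separating {S a b : Finset α}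
    (hS : IsBlockingSet (pairSymmDiffs 𝒜) S) (ha : a ∈ 𝒜) (hb : b ∈ 𝒜) (hab : a ≠ b) :
    ∃ p ∈ S, (p ∈ a ∧ p ∉ b) ∨ (p ∉ a ∧ p ∈ b) := by
  obtain ⟨p, hpS, hp⟩ := hS _ (mem_pairSymmDiffs.2 ⟨a, ha, b, hb, hab, rfl⟩)
  exact ⟨p, hpS, (mem_symmDiff.1 hp).imp_right And.symm⟩

lemma isBlockingSet_univ_pairSymmDiffs [Fintype α] : IsBlockingSet (pairSymmDiffs 𝒜) univ := by
  intro e he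
  obtain ⟨a, -, b, -, hab, rfl⟩ := mem_pairSymmDiffs.1 he
  obtain ⟨x, hx⟩ := symmDiff_nonempty.2 hab
  exact ⟨x, mem_univ x, hx⟩

lemma card_symmDiff_add_two_mul_card_inter (a b : Finset α) :
    #(a ∆ b) + 2 * #(a ∩ b) = #a + #b := by
  have ha := card_sdiff_add_card_inter a b
  have hb := card_sdiff_add_card_inter b a
  rw [inter_comm] at hb
  rw [Finset.symmDiff_def, card_union_of_disjoint disjoint_sdiff_sdiff]
  lia

lemma card_filter_subset_mul_eq_of_sized [Finite α] {k n : ℕ}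
    (h𝒜 : (𝒜 : Set (Finset α)).Sized k) {s : Finset α}
    (hn : ∀ x ∉ s, #{a ∈ 𝒜 | insert x s ⊆ a} = n) :
    #{a ∈ 𝒜 | s ⊆ a} * (k - #s) = (Nat.card α - #s) * n := by
  have := Fintype.ofFinite α
  have sum_inter : ∑ a ∈ 𝒜 with s ⊆ a, #(sᶜ ∩ a) = #sᶜ * n := by
    refine sum_card_inter fun x hx => ?_
    rw [← hn x (mem_compl.1 hx), filter_filter]
    simp only [insert_subset_iff, and_comm]
  rw [Nat.card_eq_fintype_card, ← card_compl, ← sum_inter, sum_const_nat]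
  intro a ha
  rw [mem_filter] at ha
  rw [inter_comm, ← sdiff_eq_inter_compl, card_sdiff_of_subset ha.2, h𝒜 ha.1]

end SetFamily

namespace MobiusPlane

variable {P : Type*} [DecidableEq P] {M : MobiusPlane P} {q : ℕ}

/-- The circles passing through every point of `s`. Taking a set of points as the parameter lets a
single double count serve for no point, one point and two points. -/
def circlesThrough (M : MobiusPlane P) (s : Finset P) : Finset (Finset P) :=
  {z ∈ M.circles | s ⊆ z}

lemma mem_circlesThrough {s z : Finset P} : z ∈ M.circlesThrough s ↔ z ∈ M.circles ∧ s ⊆ z :=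
  mem_filter

lemma HasOrder.two_le (h : M.HasOrder q) : 2 ≤ q := by
  obtain ⟨z, hz⟩ := M.ax3.1
  have := M.ax3.2 z hz
  have := h z hz
  lia

lemma card_inter_le_two {a b : Finset P} (ha : a ∈ M.circles) (hb : b ∈ M.circles)
    (hab : a ≠ b) : #(a ∩ b) ≤ 2 := by
  by_contra! hcard
  obtain ⟨x, hx, y, hy, z, hz, hxy, hxz, hyz⟩ := two_lt_card.1 hcard
  rw [mem_inter] at hx hy hz
  exact hab ((M.ax1 x y z hxy hxz hyz).unique ⟨ha, hx.1, hy.1, hz.1⟩ ⟨hb, hx.2, hy.2, hz.2⟩)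

lemma HasOrder.two_mul_le_card_add_two_of_mem_pairSymmDiffs (h : M.HasOrder q) {e : Finset P}
    (he : e ∈ pairSymmDiffs M.circles) : 2 * q ≤ #e + 2 := by
  obtain ⟨a, ha, b, hb, hab, rfl⟩ := mem_pairSymmDiffs.1 he
  have h_inter := card_inter_le_two ha hb hab
  have h_card := card_symmDiff_add_two_mul_card_inter a b
  rw [h a ha, h b hb] at h_card
  lia

lemma card_circlesThrough_triple {A B C : P} (hAB : A ≠ B) (hAC : A ≠ C) (hBC : B ≠ C) :
    #(M.circlesThrough {A, B, C}) = 1 := by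
  rw [card_eq_one_iff_existsUnique]
  simpa only [mem_circlesThrough, insert_subset_iff, singleton_subset_iff] using
    M.ax1 A B C hAB hAC hBC

-- Besides the circle tangent to `z` at `A`, each circle through `A` and `B` meets `z` in exactly
-- one further point, and every point of `z` other than `A` arises exactly once.
lemma card_circlesThrough_pair_of_mem_of_notMem {z : Finset P} (hz : z ∈ M.circles) {A B : P}
    (hA : A ∈ z) (hB : B ∉ z) : #(M.circlesThrough {A, B}) = #z := by
  have hAB : A ≠ B := ne_of_mem_of_not_mem hA hB
  obtain ⟨t, ⟨ht, hAt, hBt, hzt⟩, ht_unique⟩ := M.ax2 z hz A hA B hB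
  have ht_mem : t ∈ M.circlesThrough {A, B} := by
    simp [mem_circlesThrough, insert_subset_iff, ht, hAt, hBt]
  have sum_inter : ∑ C ∈ (M.circlesThrough {A, B}).erase t, #(z.erase A ∩ C) =
      #(z.erase A) * 1 := by
    refine sum_card_inter fun x hx => ?_
    obtain ⟨hxA, hxz⟩ := mem_erase.1 hx
    rw [← card_circlesThrough_triple (M := M) hAB hxA.symm (ne_of_mem_of_not_mem hxz hB).symm]
    congr 1
    ext C
    have hxt : x ∉ t := fun hxt => hxA (mem_singleton.1 (hzt ▸ mem_inter.2 ⟨hxz, hxt⟩))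
    grind [mem_circlesThrough]
  have inter_card : ∀ C ∈ (M.circlesThrough {A, B}).erase t, #(z.erase A ∩ C) = 1 := by
    intro C hC
    simp only [mem_erase, mem_circlesThrough, insert_subset_iff, singleton_subset_iff] at hC
    obtain ⟨hCt, hC, hAC, hBC⟩ := hC
    have hA_mem : A ∈ z ∩ C := mem_inter.2 ⟨hA, hAC⟩
    have h_le : #(z ∩ C) ≤ 2 := card_inter_le_two hz hC fun hzC => hB (hzC ▸ hBC)
    have h_ne : #(z ∩ C) ≠ 1 := fun h_one =>
      hCt (ht_unique C ⟨hC, hAC, hBC, (eq_of_subset_of_card_le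
        (singleton_subset_iff.2 hA_mem) (h_one.trans (card_singleton A).symm).le).symm⟩)
    have h_pos : 0 < #(z ∩ C) := card_pos.2 ⟨A, hA_mem⟩
    rw [erase_inter, card_erase_of_mem hA_mem]
    lia
  rw [sum_const_nat inter_card, mul_one, mul_one, card_erase_of_mem ht_mem,
    card_erase_of_mem hA] at sum_inter
  have := card_pos.2 ⟨t, ht_mem⟩
  have := card_pos.2 ⟨A, hA⟩
  lia

variable [Finite P]

lemma HasOrder.card_circlesThrough_mul (h : M.HasOrder q) {s : Finset P} {n : ℕ}
    (hn : ∀ x ∉ s, #(M.circlesThrough (insert x s)) = n) :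
    #(M.circlesThrough s) * (q + 1 - #s) = (Nat.card P - #s) * n :=
  card_filter_subset_mul_eq_of_sized h hn

lemma HasOrder.card_circlesThrough_pair_mul (h : M.HasOrder q) {A B : P} (hAB : A ≠ B) :
    #(M.circlesThrough {A, B}) * (q - 1) = Nat.card P - 2 := by
  have := h.card_circlesThrough_mul (s := {A, B}) (n := 1) fun x hx => by
    simp only [mem_insert, mem_singleton, not_or] at hx
    exact card_circlesThrough_triple hx.1 hx.2 hAB
  rwa [card_pair hAB, mul_one] at this

lemma HasOrder.card_points (h : M.HasOrder q) : Nat.card P = q ^ 2 + 1 := by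
  obtain ⟨z, hz⟩ := M.ax3.1
  obtain ⟨B, hB⟩ := M.ax4 z hz
  obtain ⟨A, hA⟩ : z.Nonempty := card_pos.1 (by rw [h z hz]; lia)
  have hAB : A ≠ B := ne_of_mem_of_not_mem hA hB
  have h_pair := h.card_circlesThrough_pair_mul hAB
  rw [card_circlesThrough_pair_of_mem_of_notMem hz hA hB, h z hz, ← Nat.sq_sub_sq] at h_pair
  have : 2 ^ 2 ≤ q ^ 2 := Nat.pow_le_pow_left h.two_le 2
  lia

lemma HasOrder.card_circlesThrough_pair (h : M.HasOrder q) {A B : P} (hAB : A ≠ B) :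
    #(M.circlesThrough {A, B}) = q + 1 := by
  have hq := h.two_le
  refine Nat.eq_of_mul_eq_mul_right (show 0 < q - 1 by lia) ?_
  rw [h.card_circlesThrough_pair_mul hAB, h.card_points, ← Nat.sq_sub_sq]
  rfl

lemma HasOrder.card_circlesThrough_singleton (h : M.HasOrder q) (A : P) :
    #(M.circlesThrough {A}) = q * (q + 1) := by
  have hq := h.two_le
  refine Nat.eq_of_mul_eq_mul_right (show 0 < q by lia) ?_
  have := h.card_circlesThrough_mul (s := {A}) fun x hx =>
    h.card_circlesThrough_pair (notMem_singleton.1 hx)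
  rw [card_singleton, h.card_points, Nat.add_sub_cancel, Nat.add_sub_cancel] at this
  rw [this]
  ring

lemma HasOrder.card_circles (h : M.HasOrder q) : #M.circles = q * (q ^ 2 + 1) := by
  have := h.card_circlesThrough_mul (s := ∅) fun x _ => h.card_circlesThrough_singleton x
  rw [circlesThrough, filter_true_of_mem fun z _ => empty_subset z, card_empty, h.card_points]
    at this
  refine Nat.eq_of_mul_eq_mul_right q.succ_pos (this.trans ?_)
  rw [Nat.sub_zero, Nat.succ_eq_add_one]
  ring

lemma HasOrder.card_filter_mem (h : M.HasOrder q) (p : P) :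
    #{z ∈ M.circles | p ∈ z} = q * (q + 1) := by
  simpa only [circlesThrough, singleton_subset_iff] using h.card_circlesThrough_singleton p

lemma HasOrder.card_filter_notMem_add (h : M.HasOrder q) (p : P) :
    #{z ∈ M.circles | p ∉ z} + q ^ 2 = q ^ 3 := by
  have := card_filter_add_card_filter_not (s := M.circles) (fun z => p ∈ z)
  rw [h.card_filter_mem, h.card_circles] at this
  linarith

lemma HasOrder.card_filter_mem_pairSymmDiffs_le_pow (h : M.HasOrder q) (p : P) :
    #{e ∈ pairSymmDiffs M.circles | p ∈ e} ≤ q ^ 5 := by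
  have h_missing := h.card_filter_notMem_add p
  have h_degree := card_filter_mem_pairSymmDiffs_le M.circles p
  rw [h.card_filter_mem] at h_degree
  nlinarith

end MobiusPlane

/-- There is a set of at most `((q+2)/2)·(1 + log(q⁵))` points resolving the circle
set of a Möbius plane of order `q`. -/
theorem point_split_resolving_upper_bound {P : Type*} [DecidableEq P] [Fintype P]
    (M : MobiusPlane P) (q : ℕ) (h : M.HasOrder q) :
    ∃ S : Finset P,
      (∀ a ∈ M.circles, ∀ b ∈ M.circles, a ≠ b →
        ∃ p ∈ S, (p ∈ a ∧ p ∉ b) ∨ (p ∉ a ∧ p ∈ b)) ∧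
      (S.card : ℝ) ≤ ((q : ℝ) + 2) / 2 * (1 + Real.log ((q : ℝ) ^ 5)) := by
  have hP : (Fintype.card P : ℝ) = q ^ 2 + 1 := by
    rw [← Nat.card_eq_fintype_card]
    exact_mod_cast h.card_points
  obtain rfl | hq := h.two_le.eq_or_lt
  · refine ⟨univ, fun a ha b hb => isBlockingSet_univ_pairSymmDiffs.exists_mem_separating ha hb, ?_⟩
    rw [card_univ, hP, Real.log_pow]
    push_cast
    linarith [Real.log_two_gt_d9]
  have hq : (3 : ℝ) ≤ q := by exact_mod_cast hq
  have hpos : (0 : ℝ) < 2 * q - 2 := by linarith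
  have h_edges : ∀ e ∈ pairSymmDiffs M.circles, 2 * (q : ℝ) - 2 ≤ #e := fun e he =>
    sub_le_iff_le_add.2 (by exact_mod_cast h.two_mul_le_card_add_two_of_mem_pairSymmDiffs he)
  obtain ⟨S, hS, hcard⟩ := (isFractionalBlockingSet_const hpos h_edges)
    |>.exists_isBlockingSet_card_le_mul_one_add_log h.card_filter_mem_pairSymmDiffs_le_pow
  have h_weight : ((q : ℝ) ^ 2 + 1) / (2 * q - 2) ≤ (q + 2) / 2 := by
    rw [div_le_div_iff₀ hpos two_pos]
    linarith
  have h_log : 0 ≤ Real.log ((q : ℝ) ^ 5) := Real.log_nonneg (one_le_pow₀ (by linarith))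
  refine ⟨S, fun a ha b hb => hS.exists_mem_separating ha hb, hcard.trans ?_⟩
  rw [sum_const, card_univ, nsmul_eq_mul, hP, mul_one_div, Nat.cast_pow]
  gcongr
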